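/- For every a ∈ ℂ, the first constant terms of powers of the Laurent polynomial f_a = z(a + x + xy + y + x⁻¹ + x⁻¹y⁻¹ + y⁻¹) + z⁻¹ are given by: coeff₁(f_a⁰) = 1, coeff₁(f_a²) = 2a, coeff₁(f_a⁴) = 6a² + 36, coeff₁(f_a⁶) = 20a³ + 360a + 240, coeff₁(f_a⁸) = 70a⁴ + 2520a² + 3360a + 6300, and coeff₁(f_a¹⁰) = 252a⁵ + 15120a³ + 30240a² + 113400a + 90720. -/

import Mathlib

noncomputable section

open scoped Nat

/-- The Laurent polynomial ring in three variables over `ℂ`: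
the group algebra `ℂ[ℤ³]`, where `x^i y^j z^k` corresponds to `(i,j,k)`. -/
abbrev LaurentC3 : Type := AddMonoidAlgebra ℂ (ℤ × ℤ × ℤ)

/-- The variable `x`. -/
def X : LaurentC3 := AddMonoidAlgebra.single (1, 0, 0) 1
/-- The variable `y`. -/
def Y : LaurentC3 := AddMonoidAlgebra.single (0, 1, 0) 1
/-- The variable `z`. -/
def Z : LaurentC3 := AddMonoidAlgebra.single (0, 0, 1) 1
/-- The inverse variable `x⁻¹`. -/
def Xinv : LaurentC3 := AddMonoidAlgebra.single (-1, 0, 0) 1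
/-- The inverse variable `y⁻¹`. -/
def Yinv : LaurentC3 := AddMonoidAlgebra.single (0, -1, 0) 1
/-- The inverse variable `z⁻¹`. -/
def Zinv : LaurentC3 := AddMonoidAlgebra.single (0, 0, -1) 1

/-- The Laurent polynomial `f_a = z(a + x + xy + y + x⁻¹ + x⁻¹y⁻¹ + y⁻¹) + z⁻¹`. -/
def f (a : ℂ) : LaurentC3 :=
  Z * (AddMonoidAlgebra.single 0 a + X + X * Y + Y + Xinv + Xinv * Yinv + Yinv) + Zinv

/-- Number of hexagonal-lattice walks of length `n` ending at `(i, j)`. -/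
def walks : ℕ → ℤ → ℤ → ℕ
  | 0, i, j => if i = 0 ∧ j = 0 then 1 else 0
  | n + 1, i, j => walks n (i - 1) j + walks n (i - 1) (j - 1) + walks n i (j - 1)
      + walks n (i + 1) j + walks n (i + 1) (j + 1) + walks n i (j + 1)

/-- The hexagonal part. -/
def Q : LaurentC3 := X + X * Y + Y + Xinv + Xinv * Yinv + Yinv

lemma coeff_single_mul_all (g h : ℤ × ℤ × ℤ) (r : ℂ) (p : LaurentC3) :
    (AddMonoidAlgebra.single g r * p : LaurentC3).coeff h = r * p.coeff (h - g) := by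
  have h1 := AddMonoidAlgebra.coeff_single_mul_add p r g (h - g)
  rwa [add_sub_cancel] at h1

lemma coeff_Q_pow (q : ℕ) : ∀ i j k : ℤ,
    (Q ^ q).coeff (i, j, k) = if k = 0 then (walks q i j : ℂ) else 0 := by
  induction q with
  | zero =>
    intro i j k
    rw [pow_zero, AddMonoidAlgebra.one_def]
    simp only [AddMonoidAlgebra.coeff_single, Finsupp.single_apply, walks, Prod.ext_iff]
    simp only [Prod.fst_zero, Prod.snd_zero, eq_comm (a := (0 : ℤ))]
    split_ifs <;> simp_all
  | succ q ih =>
    intro i j k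
    have hQ : Q ^ (q + 1) = (X + X * Y + Y + Xinv + Xinv * Yinv + Yinv) * Q ^ q := by
      rw [pow_succ']; rfl
    rw [hQ]
    simp only [X, Y, Xinv, Yinv, AddMonoidAlgebra.single_mul_single, add_mul,
      AddMonoidAlgebra.coeff_add, Finsupp.add_apply, coeff_single_mul_all, Prod.mk_sub_mk,
      Prod.mk_add_mk, ih, walks]
    split_ifs <;> simp_all

lemma coeff_monomial (a : ℂ) (p q r s : ℕ) :
    (Z ^ r * (AddMonoidAlgebra.single 0 a ^ p * Q ^ q) * Zinv ^ s).coeff (0, 0, 0)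
      = if r = s then a ^ p * (walks q 0 0 : ℂ) else 0 := by
  have h1 : Z ^ r * (AddMonoidAlgebra.single 0 a ^ p * Q ^ q) * Zinv ^ s
      = Z ^ r * (Zinv ^ s * (AddMonoidAlgebra.single 0 a ^ p * Q ^ q)) := by ring
  rw [h1]
  simp only [Z, Zinv, AddMonoidAlgebra.single_pow, coeff_single_mul_all, Prod.smul_mk,
    Prod.mk_sub_mk, smul_zero, sub_zero, coeff_Q_pow, one_pow, one_mul, mul_ite, mul_zero]
  congr 1
  simp
  omega

lemma coeff_f_pow (a : ℂ) (n : ℕ) :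
    (f a ^ n).coeff (0, 0, 0) = ∑ m ∈ Finset.range (n + 1), ∑ p ∈ Finset.range (m + 1),
      (if m = n - m then a ^ p * (walks (m - p) 0 0 : ℂ) else 0) * (m.choose p * n.choose m : ℕ) := by
  have hf : f a = Z * (AddMonoidAlgebra.single 0 a + Q) + Zinv := by
    rw [f, Q]; ring
  have : f a ^ n = ∑ m ∈ Finset.range (n + 1), ∑ p ∈ Finset.range (m + 1),
      (m.choose p * n.choose m : ℕ) •
      (Z ^ m * (AddMonoidAlgebra.single 0 a ^ p * Q ^ (m - p)) * Zinv ^ (n - m)) := by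
    rw [hf, add_pow]
    refine Finset.sum_congr rfl fun m _ => ?_
    rw [mul_pow, add_pow, Finset.mul_sum, Finset.sum_mul, Finset.sum_mul]
    refine Finset.sum_congr rfl fun p _ => ?_
    rw [nsmul_eq_mul]; push_cast; ring
  rw [this]
  simp only [AddMonoidAlgebra.coeff_sum, Finsupp.finsetSum_apply, AddMonoidAlgebra.coeff_smul, Finsupp.smul_apply, coeff_monomial]
  refine Finset.sum_congr rfl fun m _ => Finset.sum_congr rfl fun p _ => ?_
  rw [nsmul_eq_mul, mul_comm]

lemma w0 : walks 0 0 0 = 1 := by decide +kernel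
lemma w1 : walks 1 0 0 = 0 := by decide +kernel
lemma w2 : walks 2 0 0 = 6 := by decide +kernel
lemma w3 : walks 3 0 0 = 12 := by decide +kernel
lemma w4 : walks 4 0 0 = 90 := by decide +kernel
lemma w5 : walks 5 0 0 = 360 := by decide +kernel

/-- The first constant terms of even powers of `f_a`:
`1`, `2a`, `6a² + 36`, `20a³ + 360a + 240`, `70a⁴ + 2520a² + 3360a + 6300`,
`252a⁵ + 15120a³ + 30240a² + 113400a + 90720`. -/
theorem constant_terms_powers_f (a : ℂ) :
    (f a ^ 0).coeff (0, 0, 0) = 1 ∧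
    (f a ^ 2).coeff (0, 0, 0) = 2 * a ∧
    (f a ^ 4).coeff (0, 0, 0) = 6 * a ^ 2 + 36 ∧
    (f a ^ 6).coeff (0, 0, 0) = 20 * a ^ 3 + 360 * a + 240 ∧
    (f a ^ 8).coeff (0, 0, 0) = 70 * a ^ 4 + 2520 * a ^ 2 + 3360 * a + 6300 ∧
    (f a ^ 10).coeff (0, 0, 0) =
      252 * a ^ 5 + 15120 * a ^ 3 + 30240 * a ^ 2 + 113400 * a + 90720 := by
  simp only [coeff_f_pow]
  refine ⟨?_, ?_, ?_, ?_, ?_, ?_⟩ <;>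
    · simp [Finset.sum_range_succ, w0, w1, w2, w3, w4, w5, Nat.choose]
      try ring

end
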